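/- arXiv:1509.02019 — 2 statements merged into one kernel-verified Lean document; each statement's English description precedes it below -/
import Mathlib

section
/- Let 𝐅 = (F_1,…,F_d) be a d-tuple of continuous cdfs on ℝ with F_{i-1} ≥ F_i pointwise for all 2 ≤ i ≤ d. Then J(𝐅) = J(δ^𝐅), where δ^𝐅 = (F_i ∘ G^{-1}, 1 ≤ i ≤ d) and G = (1/d) Σ_{i=1}^d F_i. -/
/- Formalization framework for "Maximum entropy distribution of order statistics with given
marginals" (Butucea, Delmas, Dutfoy, Fischer).  One-dimensional cdfs are identified with
(probability) measures on `ℝ`, and cdfs on `ℝ^d` with measures on `Fin d → ℝ`. -/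

open MeasureTheory Set
open scoped ENNReal

noncomputable section

namespace MaxEntOS

variable {d : ℕ}

/-- The cumulative distribution function of a measure on `ℝ`. -/
def cdf1 (ν : Measure ℝ) (t : ℝ) : ℝ := (ν (Iic t)).toReal

/-- The cdf extended to `EReal` arguments (so that `cdfE ν ⊥ = 0` and `cdfE ν ⊤ = ν ℝ`). -/
def cdfE (ν : Measure ℝ) (x : EReal) : ℝ := (ν {s : ℝ | (s : EReal) ≤ x}).toReal

/-- The generalized inverse (quantile function) of the cdf of `ν`, real-valued. -/
def qReal (ν : Measure ℝ) (t : ℝ) : ℝ := sInf {s : ℝ | t ≤ cdf1 ν s}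

/-- The generalized inverse of a nondecreasing function `g : ℝ → ℝ`, `EReal`-valued, with the
conventions `inf ∅ = ⊤` and `inf ℝ = ⊥`. -/
def qInvE (g : ℝ → ℝ) (t : ℝ) : EReal := sInf ((fun s : ℝ => (s : EReal)) '' {s : ℝ | t ≤ g s})

open scoped Classical in
/-- The differential entropy (with respect to Lebesgue measure) of a measure, with values in
`EReal` : it equals `⊥` if the measure is not absolutely continuous, and otherwise it is
`−∫ f log f`, computed as the difference of the lower integrals of the negative and positive
parts of `f log f`, where `f` is the density. -/
def dEntropy {α : Type*} [MeasureSpace α] (μ : Measure α) : EReal :=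
  if μ ≪ (volume : Measure α) then
    ((∫⁻ x, ENNReal.ofReal
        (-((μ.rnDeriv volume x).toReal * Real.log ((μ.rnDeriv volume x).toReal))) : ℝ≥0∞) : EReal)
      - ((∫⁻ x, ENNReal.ofReal
        ((μ.rnDeriv volume x).toReal * Real.log ((μ.rnDeriv volume x).toReal)) : ℝ≥0∞) : EReal)
  else ⊥

/-- The nondecreasing rearrangement (order statistics) of a tuple. -/
def orderStat (x : Fin d → ℝ) : Fin d → ℝ := fun i => x (Tuple.sort x i)

/-- The `i`-th one-dimensional marginal of a measure on `ℝ^d`. -/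
def marg (μ : Measure (Fin d → ℝ)) (i : Fin d) : Measure ℝ := μ.map fun x => x i

/-- The multidiagonal of a measure on `ℝ^d` : the tuple of one-dimensional marginals of the
order statistics. -/
def multidiag (μ : Measure (Fin d → ℝ)) (i : Fin d) : Measure ℝ := μ.map fun x => orderStat x i

/-- The uniform distribution on `[0,1]`. -/
def uniform01 : Measure ℝ := (volume : Measure ℝ).restrict (Icc 0 1)

/-- A copula : a probability measure on `ℝ^d` whose one-dimensional marginals are all uniform
on `[0,1]`. -/
def IsCopula (μ : Measure (Fin d → ℝ)) : Prop :=
  IsProbabilityMeasure μ ∧ ∀ i, marg μ i = uniform01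

/-- A measure on `ℝ^d` is symmetric (exchangeable) if it is invariant under permutations of the
coordinates. -/
def IsSymmetric (μ : Measure (Fin d → ℝ)) : Prop :=
  ∀ π : Equiv.Perm (Fin d), μ.map (fun x => fun i => x (π i)) = μ

/-- `δ` belongs to `D` : it is the multidiagonal of some copula. -/
def IsMultidiag (δ : Fin d → Measure ℝ) : Prop :=
  ∃ μ : Measure (Fin d → ℝ), IsCopula μ ∧ multidiag μ = δ

/-- `δ` belongs to `D^0` : it is the multidiagonal of some absolutely continuous copula. -/
def IsMultidiag0 (δ : Fin d → Measure ℝ) : Prop :=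
  ∃ μ : Measure (Fin d → ℝ), IsCopula μ ∧ μ ≪ (volume : Measure (Fin d → ℝ)) ∧ multidiag μ = δ

/-- `F ∈ F_d` : `F` is a `d`-tuple of continuous one-dimensional cdfs (identified with atomless
probability measures on `ℝ`) which are stochastically ordered : `F (i-1) ≥ F i` pointwise. -/
structure IsMargOS [NeZero d] (F : Fin d → Measure ℝ) : Prop where
  prob : ∀ i, IsProbabilityMeasure (F i)
  cont : ∀ i, ∀ t : ℝ, F i {t} = 0
  ord : ∀ i : Fin d, i ≠ 0 → ∀ t : ℝ, cdf1 (F i) t ≤ cdf1 (F (i - 1)) t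

/-- `μ ∈ L^OS_d(F)` : `μ` is the distribution of a `d`-dimensional order statistic (an almost
surely nondecreasing random vector) with one-dimensional marginals `F`. -/
def IsCdfOS (F : Fin d → Measure ℝ) (μ : Measure (Fin d → ℝ)) : Prop :=
  IsProbabilityMeasure μ ∧ μ {x | Monotone x} = 1 ∧ ∀ i, marg μ i = F i

/-- `F ∈ F_d^0` : there exists an absolutely continuous distribution of order statistics with
one-dimensional marginals `F`. -/
def IsMargOS0 [NeZero d] (F : Fin d → Measure ℝ) : Prop :=
  IsMargOS F ∧ ∃ μ : Measure (Fin d → ℝ), IsCdfOS F μ ∧ μ ≪ (volume : Measure (Fin d → ℝ))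

/-- The functional `J(F) = ∑_{i=2}^d ∫ |log (F_{i-1}(t) − F_i(t))| dF_i(t) ∈ [0,∞]`. -/
def Jfun [NeZero d] (F : Fin d → Measure ℝ) : ℝ≥0∞ :=
  ∑ i : Fin d, if i = 0 then 0 else
    ∫⁻ t, ENNReal.ofReal |Real.log (cdf1 (F (i - 1)) t - cdf1 (F i) t)| ∂(F i)

/-- The copula of a measure on `ℝ^d` (for continuous marginals this is the unique copula
provided by Sklar's theorem) : the law of `(F_1(X_1), …, F_d(X_d))`. -/
def copulaOf (μ : Measure (Fin d → ℝ)) : Measure (Fin d → ℝ) :=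
  μ.map fun x => fun i => cdf1 (marg μ i) (x i)

/-- The set `C^{OS}(F)` of copulas of distributions of order statistics with marginal
cdfs `F`. -/
def copulaOS (F : Fin d → Measure ℝ) : Set (Measure (Fin d → ℝ)) :=
  {C | ∃ μ, IsCdfOS F μ ∧ copulaOf μ = C}

/-- The joint distribution with one-dimensional marginals `F` and copula `C` : the law of
`(F_1^{-1}(U_1), …, F_d^{-1}(U_d))` where `U ∼ C`. -/
def joinCopula (F : Fin d → Measure ℝ) (C : Measure (Fin d → ℝ)) : Measure (Fin d → ℝ) :=
  C.map fun u => fun i => qReal (F i) (u i)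

/-- The law of `X_Π`, where `X ∼ μ` and `Π` is an independent uniform random permutation of
`{1, …, d}`. -/
def symmetrize (μ : Measure (Fin d → ℝ)) : Measure (Fin d → ℝ) :=
  (d.factorial : ℝ≥0∞)⁻¹ • ∑ π : Equiv.Perm (Fin d), μ.map (fun x => fun i => x (π i))

/-- The symmetrizing operator `S_F` on copulas : `S_F(C)` is the copula of `X_Π` where `X` has
one-dimensional marginals `F` and copula `C`, and `Π` is an independent uniform random
permutation. -/
def SF (F : Fin d → Measure ℝ) (C : Measure (Fin d → ℝ)) : Measure (Fin d → ℝ) :=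
  copulaOf (symmetrize (joinCopula F C))

/-- The average cdf `G = (1/d) ∑_{i=1}^d F_i`. -/
def Gbar (F : Fin d → Measure ℝ) (t : ℝ) : ℝ := (∑ i, cdf1 (F i) t) / d

/-- `G` extended to `EReal` arguments (`GbarE F ⊥ = 0` and `GbarE F ⊤ = 1` for probability
measures). -/
def GbarE (F : Fin d → Measure ℝ) (x : EReal) : ℝ := (∑ i, cdfE (F i) x) / d

/-- The multidiagonal `δ^F` associated to the marginals `F`, as a tuple of measures : the law
of `G(X_i)` where `X_i ∼ F_i`, whose cdf is `F_i ∘ G^{-1}`. -/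
def mdiagF (F : Fin d → Measure ℝ) (i : Fin d) : Measure ℝ := (F i).map (Gbar F)

/-- `C` is a copula of the measure `ν` on `ℝ^d` : `C` is a copula and `ν` is the joint
distribution with the marginals of `ν` and copula `C`. -/
def IsCopulaOf (C ν : Measure (Fin d → ℝ)) : Prop :=
  IsCopula C ∧ ν = joinCopula (marg ν) C

/-- The extended tuple of multidiagonal cdfs, with the conventions `δ_(0) = 1` and
`δ_(d+1) = 0`; the natural index `i ∈ {1, …, d}` corresponds to `δ_(i)`. -/
def dcdf (δ : Fin d → Measure ℝ) (i : ℕ) (t : ℝ) : ℝ :=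
  if h0 : i = 0 then 1
  else if h : i ≤ d then cdf1 (δ ⟨i - 1, by omega⟩) t
  else 0

/-- The open set `Ψ^δ_i = {t ∈ (0,1) : δ_(i-1)(t) > δ_(i)(t)}`, for `1 ≤ i ≤ d+1`
(with the conventions `δ_(0) = 1` and `δ_(d+1) = 0`). -/
def Psi (δ : Fin d → Measure ℝ) (i : ℕ) : Set ℝ :=
  Ioo 0 1 ∩ {t | dcdf δ i t < dcdf δ (i - 1) t}

/-- Left endpoint of the connected component of `U` containing `t`. -/
def lend (U : Set ℝ) (t : ℝ) : ℝ := sSup {s | s ≤ t ∧ s ∉ U}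

/-- Right endpoint of the connected component of `U` containing `t`. -/
def rend (U : Set ℝ) (t : ℝ) : ℝ := sInf {s | t ≤ s ∧ s ∉ U}

/-- Midpoint `m_i^{(j)}` of the connected component of `U` containing `t`. -/
def midpt (U : Set ℝ) (t : ℝ) : ℝ := (lend U t + rend U t) / 2

/-- The integrand `δ'_(i)(s) / (δ_(i-1)(s) − δ_(i)(s))` (that is, `K'_i`). -/
def kInt (δ : Fin d → Measure ℝ) (i : ℕ) (s : ℝ) : ℝ :=
  deriv (dcdf δ i) s / (dcdf δ (i - 1) s - dcdf δ i s)

/-- `K_i(t)`, integrating `K'_i` from the midpoint of the connected component of `Ψ^δ_i`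
containing `t` (note `K_{d+1} = 0` holds automatically, `δ_(d+1)` being constant). -/
def Kfun (δ : Fin d → Measure ℝ) (i : ℕ) (t : ℝ) : ℝ :=
  ∫ s in (midpt (Psi δ i) t)..t, kInt δ i s

/-- The function `a_i(t) = K'_i(t) e^{K_{i+1}(t) − K_i(t)} 1_{Ψ^δ_i ∩ Ψ^δ_{i+1}}(t)`. -/
def aFun (δ : Fin d → Measure ℝ) (i : ℕ) : ℝ → ℝ :=
  (Psi δ i ∩ Psi δ (i + 1)).indicator fun t =>
    kInt δ i t * Real.exp (Kfun δ (i + 1) t - Kfun δ i t)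

/-- The set `L_δ` of `u ∈ [0,1]^d` such that `(u_(i-1), u_(i)) ⊆ Ψ^δ_i` for all `2 ≤ i ≤ d`. -/
def Lset [NeZero d] (δ : Fin d → Measure ℝ) : Set (Fin d → ℝ) :=
  {u | (∀ j, u j ∈ Icc (0 : ℝ) 1) ∧
    ∀ i : Fin d, i ≠ 0 → Ioo (orderStat u (i - 1)) (orderStat u i) ⊆ Psi δ (i.val + 1)}

/-- The density `c_δ(u) = (1/d!) 1_{L_δ}(u) ∏_{i=1}^d a_i(u_(i))` of the maximum entropy copula
with multidiagonal `δ`. -/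
def cDelta [NeZero d] (δ : Fin d → Measure ℝ) : (Fin d → ℝ) → ℝ :=
  (Lset δ).indicator fun u =>
    (d.factorial : ℝ)⁻¹ * ∏ i : Fin d, aFun δ (i.val + 1) (orderStat u i)

/-- The maximum entropy copula `C_δ` with multidiagonal `δ` : the measure with density `c_δ`. -/
def CDelta [NeZero d] (δ : Fin d → Measure ℝ) : Measure (Fin d → ℝ) :=
  (volume : Measure (Fin d → ℝ)).withDensity fun u => ENNReal.ofReal (cDelta δ u)

/-- The density of a one-dimensional measure `ν` with respect to Lebesgue measure. -/
def densOf (ν : Measure ℝ) (t : ℝ) : ℝ := (ν.rnDeriv volume t).toReal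

/-- The function `ℓ_i(t) = f_i(t) / (F_{i-1}(t) − F_i(t))`. -/
def ellF [NeZero d] (F : Fin d → Measure ℝ) (i : Fin d) (t : ℝ) : ℝ :=
  densOf (F i) t / (cdf1 (F (i - 1)) t - cdf1 (F i) t)

/-- The set `L^F` of ordered vectors `x ∈ ℝ^d` such that `F_{i-1}(t) > F_i(t)` for all
`t ∈ (x_{i-1}, x_i)` and all `2 ≤ i ≤ d`. -/
def LsetF [NeZero d] (F : Fin d → Measure ℝ) : Set (Fin d → ℝ) :=
  {x | Monotone x ∧ ∀ i : Fin d, i ≠ 0 →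
    ∀ t ∈ Ioo (x (i - 1)) (x i), cdf1 (F i) t < cdf1 (F (i - 1)) t}

/-- The density `f_F` of the maximum entropy distribution of order statistics with marginal
cdfs `F` :
`f_F(x) = f_1(x_1) ∏_{i=2}^d ℓ_i(x_i) exp(−∫_{x_{i-1}}^{x_i} ℓ_i(s) ds) 1_{L^F}(x)`. -/
def fF [NeZero d] (F : Fin d → Measure ℝ) : (Fin d → ℝ) → ℝ :=
  (LsetF F).indicator fun x =>
    densOf (F 0) (x 0) *
      ∏ i ∈ Finset.univ.erase (0 : Fin d),
        ellF F i (x i) * Real.exp (-∫ s in (x (i - 1))..(x i), ellF F i s)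


/-!
Every `F_i` is flat wherever the average `G` is, since the `F_i` are nondecreasing. So for each `t`
the event `G(X_i) ≤ G(t)` differs from `X_i ≤ t` by an `F_i`-null set, which gives `δ_i ∘ G = F_i`.
The change of variables `u = G(t)` then identifies the two integrals in each term of `J`.
-/

section LinearOrder

variable {α β : Type*} [LinearOrder α] [TopologicalSpace α] [OrderClosedTopology α]
  [SecondCountableTopology α] [MeasurableSpace α]

lemma measure_eq_zero_of_forall_measure_Ioc_eq_zero {ν : Measure α} {a : α} {S : Set α}
    (hS : S ⊆ Ioi a) (hnull : ∀ b ∈ S, ν (Ioc a b) = 0) : ν S = 0 := by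
  refine measure_null_of_locally_null S fun x hx => ?_
  by_cases hmax : ∃ y ∈ S, x < y
  · obtain ⟨y, hy, hxy⟩ := hmax
    exact ⟨Ioc a y, mem_nhdsWithin_of_mem_nhds (Ioc_mem_nhds (hS hx) hxy), hnull y hy⟩
  · push Not at hmax
    exact ⟨Ioc a x, Filter.mem_of_superset self_mem_nhdsWithin fun s hs => ⟨hS hs, hmax s hs⟩,
      hnull x hx⟩

variable [PartialOrder β]

lemma measure_preimage_Iic_eq_of_monotone {ν : Measure α} {g : α → β} (hg : Monotone g)
    {a : α} (hflat : ∀ b, a < b → g b = g a → ν (Ioc a b) = 0) :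
    ν (g ⁻¹' Iic (g a)) = ν (Iic a) := by
  refine le_antisymm ?_ (measure_mono fun s hs => hg hs)
  have hcover : g ⁻¹' Iic (g a) ⊆ Iic a ∪ {s | a < s ∧ g s = g a} := fun s hs =>
    (le_or_gt s a).imp id fun has => ⟨has, le_antisymm hs (hg has.le)⟩
  have hnull : ν {s | a < s ∧ g s = g a} = 0 :=
    measure_eq_zero_of_forall_measure_Ioc_eq_zero (fun _ hs => hs.1)
      fun b hb => hflat b hb.1 hb.2
  calc ν (g ⁻¹' Iic (g a)) ≤ ν (Iic a) + ν {s | a < s ∧ g s = g a} :=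
        (measure_mono hcover).trans (measure_union_le _ _)
    _ = ν (Iic a) := by rw [hnull, add_zero]

end LinearOrder

lemma cdf1_mono (ν : Measure ℝ) [IsFiniteMeasure ν] : Monotone (cdf1 ν) := fun _ _ h =>
  measureReal_mono (Iic_subset_Iic.2 h)

lemma measure_Ioc_eq_zero_of_cdf1_eq {ν : Measure ℝ} [IsFiniteMeasure ν] {a b : ℝ}
    (hab : a ≤ b) (h : cdf1 ν b = cdf1 ν a) : ν (Ioc a b) = 0 := by
  rw [← measureReal_eq_zero_iff, ← Iic_sdiff_Iic,
    measureReal_sdiff (Iic_subset_Iic.2 hab) measurableSet_Iic]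
  exact sub_eq_zero.2 h

section Average

variable (F : Fin d → Measure ℝ) [∀ i, IsFiniteMeasure (F i)]

lemma Gbar_mono : Monotone (Gbar F) := fun _ _ h =>
  div_le_div_of_nonneg_right (Finset.sum_le_sum fun i _ => cdf1_mono (F i) h) d.cast_nonneg

instance isFiniteMeasure_mdiagF (i : Fin d) : IsFiniteMeasure (mdiagF F i) :=
  inferInstanceAs (IsFiniteMeasure ((F i).map (Gbar F)))

variable {F} in
lemma cdf1_eq_of_Gbar_eq {a b : ℝ} (hab : a ≤ b) (hG : Gbar F b = Gbar F a) (i : Fin d) :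
    cdf1 (F i) b = cdf1 (F i) a := by
  have hd : (d : ℝ) ≠ 0 := Nat.cast_ne_zero.2 i.pos.ne'
  have hsum : ∑ j, cdf1 (F j) a = ∑ j, cdf1 (F j) b := ((div_left_inj' hd).1 hG).symm
  exact ((Finset.sum_eq_sum_iff_of_le fun j _ => cdf1_mono (F j) hab).1 hsum i
    (Finset.mem_univ i)).symm

lemma cdf1_mdiagF_Gbar (i : Fin d) (t : ℝ) :
    cdf1 (mdiagF F i) (Gbar F t) = cdf1 (F i) t := by
  unfold cdf1 mdiagF
  rw [Measure.map_apply (Gbar_mono F).measurable measurableSet_Iic,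
    measure_preimage_Iic_eq_of_monotone (Gbar_mono F) fun _ htb hG =>
      measure_Ioc_eq_zero_of_cdf1_eq htb.le (cdf1_eq_of_Gbar_eq htb.le hG i)]

lemma lintegral_mdiagF_comp_cdf1 {φ : (Fin d → ℝ) → ℝ≥0∞} (hφ : Measurable φ) (i : Fin d) :
    ∫⁻ u, φ (fun j => cdf1 (mdiagF F j) u) ∂mdiagF F i =
      ∫⁻ t, φ (fun j => cdf1 (F j) t) ∂F i := by
  have hcdf : Measurable fun u j => cdf1 (mdiagF F j) u :=
    measurable_pi_lambda _ fun j => (cdf1_mono (mdiagF F j)).measurable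
  calc ∫⁻ u, φ (fun j => cdf1 (mdiagF F j) u) ∂mdiagF F i
      = ∫⁻ t, φ (fun j => cdf1 (mdiagF F j) (Gbar F t)) ∂F i :=
        lintegral_map (hφ.comp hcdf) (Gbar_mono F).measurable
    _ = ∫⁻ t, φ (fun j => cdf1 (F j) t) ∂F i := by simp only [cdf1_mdiagF_Gbar]

end Average

theorem stmt_11_general [NeZero d] (F : Fin d → Measure ℝ) [∀ i, IsFiniteMeasure (F i)] :
    Jfun F = Jfun (mdiagF F) := by
  refine Finset.sum_congr rfl fun i _ => ?_
  have hintegrand : Measurable fun x : Fin d → ℝ =>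
      ENNReal.ofReal |Real.log (x (i - 1) - x i)| := by fun_prop
  rw [lintegral_mdiagF_comp_cdf1 F hintegrand i]

/-- Lemma `lem:J(F)`.  Let `F = (F_1, …, F_d)` be a `d`-tuple of continuous
cdfs on `ℝ` with `F_{i-1} ≥ F_i` pointwise.  Then `J(F) = J(δ^F)`, where
`δ^F = (F_i ∘ G^{-1}, 1 ≤ i ≤ d)` (the law of `G(X_i)` for `X_i ∼ F_i`) and
`G = (1/d) ∑_{i=1}^d F_i`. -/
theorem stmt_11 {d : ℕ} [NeZero d] (F : Fin d → Measure ℝ) (hF : IsMargOS F) :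
    Jfun F = Jfun (mdiagF F) := by
  have := hF.prob
  exact stmt_11_general F

end MaxEntOS
end
end

section
/- Let X be a random vector on ℝ^d, X^OS its order statistics, and Π a uniform random permutation of {1,…,d} independent of X. Then H((X^OS)_Π) = log(d!) + H(X^OS), where (X^OS)_Π is the vector obtained from X^OS by permuting its components by Π. -/
/- Formalization framework for "Maximum entropy distribution of order statistics with given
marginals" (Butucea, Delmas, Dutfoy, Fischer).  One-dimensional cdfs are identified with
(probability) measures on `ℝ`, and cdfs on `ℝ^d` with measures on `Fin d → ℝ`. -/

open MeasureTheory Set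
open scoped ENNReal

noncomputable section

namespace MaxEntOS

variable {d : ℕ}

/-! Entropy is additive over mutually singular measures, because at almost every point at most one
of the densities is nonzero, and it scales like `H(c ν) = c H(ν) - c log c · ν(α)`. If `ν₁, …, νₙ`
are mutually singular images of one measure `ν` under volume-preserving equivalences, then they all
have the entropy of `ν`, and so `n⁻¹ ∑ νᵢ` has entropy `H(ν) + log n · ν(α)`.

For absolutely continuous `ν` carried by nondecreasing vectors, ties are negligible, and the images
of `ν` under the `d!` permutations of coordinates are carried by disjoint Weyl chambers. If `ν` is
not absolutely continuous, neither is its symmetrization, and both entropies are `⊥`. -/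

section QuasiIntegral

variable {α β : Type*} [MeasurableSpace α] [MeasurableSpace β] {μ : Measure α} {ν : Measure β}
  {u v : α → ℝ}

/-- The Lebesgue integral of a real function with values in the extended reals, that is, the
integral of the positive part minus that of the negative part. When both are infinite the value
is `⊤ - ⊤ = ⊥`. -/
def quasiIntegral (μ : Measure α) (u : α → ℝ) : EReal :=
  ((∫⁻ x, ENNReal.ofReal (u x) ∂μ : ℝ≥0∞) : EReal)
    - ((∫⁻ x, ENNReal.ofReal (-u x) ∂μ : ℝ≥0∞) : EReal)

@[simp]
lemma quasiIntegral_zero : quasiIntegral μ 0 = 0 := by simp [quasiIntegral]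

lemma quasiIntegral_congr_ae (h : u =ᵐ[μ] v) : quasiIntegral μ u = quasiIntegral μ v := by
  unfold quasiIntegral
  congr 2 <;> exact lintegral_congr_ae (h.mono fun x hx => by simp only [hx])

lemma quasiIntegral_comp {e : α → β} (he : MeasurePreserving e μ ν) (hemb : MeasurableEmbedding e)
    (w : β → ℝ) : quasiIntegral μ (fun x => w (e x)) = quasiIntegral ν w := by
  simp only [quasiIntegral, he.lintegral_comp_emb hemb fun y => ENNReal.ofReal (w y),
    he.lintegral_comp_emb hemb fun y => ENNReal.ofReal (-w y)]

lemma quasiIntegral_const_mul {c : ℝ} (hc : 0 ≤ c) (u : α → ℝ) :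
    quasiIntegral μ (fun x => c * u x) = c * quasiIntegral μ u := by
  have hc' : (ENNReal.ofReal c : EReal) = c := by simp [hc]
  simp only [quasiIntegral, ← mul_neg, ENNReal.ofReal_mul hc,
    lintegral_const_mul' _ _ ENNReal.ofReal_ne_top, EReal.coe_ennreal_mul, hc']
  exact (EReal.mul_sub_of_nonneg_of_ne_top (by exact_mod_cast hc) (EReal.coe_ne_top c)).symm

lemma quasiIntegral_add_of_ae_eq_zero_or (hu : Measurable u) (h : ∀ᵐ x ∂μ, u x = 0 ∨ v x = 0) :
    quasiIntegral μ (fun x => u x + v x) = quasiIntegral μ u + quasiIntegral μ v := by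
  have hpos : ∫⁻ x, ENNReal.ofReal (u x + v x) ∂μ =
      ∫⁻ x, ENNReal.ofReal (u x) ∂μ + ∫⁻ x, ENNReal.ofReal (v x) ∂μ := by
    rw [← lintegral_add_left (by fun_prop)]
    refine lintegral_congr_ae (h.mono ?_)
    rintro x (hx | hx) <;> simp [hx]
  have hneg : ∫⁻ x, ENNReal.ofReal (-(u x + v x)) ∂μ =
      ∫⁻ x, ENNReal.ofReal (-u x) ∂μ + ∫⁻ x, ENNReal.ofReal (-v x) ∂μ := by
    rw [← lintegral_add_left (by fun_prop)]
    refine lintegral_congr_ae (h.mono ?_)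
    rintro x (hx | hx) <;> simp [hx]
  simp only [quasiIntegral, hpos, hneg, EReal.coe_ennreal_add]
  exact EReal.add_sub_add_comm (.inl (EReal.coe_ennreal_ne_bot _))
    (.inr (EReal.coe_ennreal_ne_bot _))

lemma coe_sub_coe_eq_add_of_add_eq_add {a a' b b' p q : ℝ≥0∞} (hp : p ≠ ⊤) (hq : q ≠ ⊤)
    (hb : b' = ⊤ ↔ b = ⊤) (h : a' + b + q = b' + a + p) :
    (a' : EReal) - b' = (a - b) + (p - q) := by
  by_cases hbt : b = ⊤
  · simp [hbt, hb.2 hbt]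
  have hbt' : b' ≠ ⊤ := mt hb.1 hbt
  lift b to NNReal using hbt
  lift b' to NNReal using hbt'
  lift p to NNReal using hp
  lift q to NNReal using hq
  have coe_coe (r : NNReal) : ((r : ℝ≥0∞) : EReal) = ((r : ℝ) : EReal) := rfl
  by_cases hat : a = ⊤
  · have hat' : a' = ⊤ := by simpa [hat] using h
    simp [hat, hat', coe_coe, ← EReal.coe_sub]
  have hat' : a' ≠ ⊤ := fun ha' => hat (by simpa [ha'] using h.symm)
  lift a to NNReal using hat
  lift a' to NNReal using hat'
  have h_real : (a' : ℝ) + b + q = b' + a + p := by exact_mod_cast h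
  simp only [coe_coe]
  norm_cast
  linarith

lemma ofReal_add_add_ofReal_neg_add_ofReal_neg (a b : ℝ) :
    ENNReal.ofReal (a + b) + ENNReal.ofReal (-a) + ENNReal.ofReal (-b) =
      ENNReal.ofReal (-(a + b)) + ENNReal.ofReal a + ENNReal.ofReal b := by
  simp only [ENNReal.ofReal]
  norm_cast
  rw [← NNReal.coe_inj]
  push_cast [Real.coe_toNNReal']
  grind

lemma quasiIntegral_eq_coe_integral (hv : Integrable v μ) :
    quasiIntegral μ v = ((∫ x, v x ∂μ : ℝ) : EReal) := by
  have h_pos : ∫⁻ x, ENNReal.ofReal (v x) ∂μ ≠ ⊤ := hv.lintegral_lt_top.ne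
  have h_neg : ∫⁻ x, ENNReal.ofReal (-v x) ∂μ ≠ ⊤ := hv.neg.lintegral_lt_top.ne
  rw [quasiIntegral, integral_eq_lintegral_pos_part_sub_lintegral_neg_part hv, EReal.coe_sub,
    EReal.coe_ennreal_toReal h_pos, EReal.coe_ennreal_toReal h_neg]

lemma lintegral_ofReal_add_le (hv : Measurable v) :
    ∫⁻ x, ENNReal.ofReal (u x + v x) ∂μ ≤
      ∫⁻ x, ENNReal.ofReal (u x) ∂μ + ∫⁻ x, ENNReal.ofReal (v x) ∂μ := by
  rw [← lintegral_add_right _ (by fun_prop)]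
  exact lintegral_mono fun x => ENNReal.ofReal_add_le

lemma quasiIntegral_add_of_integrable (hu : Measurable u) (hvm : Measurable v)
    (hv : Integrable v μ) :
    quasiIntegral μ (fun x => u x + v x) = quasiIntegral μ u + ((∫ x, v x ∂μ : ℝ) : EReal) := by
  have hv_pos : ∫⁻ x, ENNReal.ofReal (v x) ∂μ ≠ ⊤ := hv.lintegral_lt_top.ne
  have hv_neg : ∫⁻ x, ENNReal.ofReal (-v x) ∂μ ≠ ⊤ := hv.neg.lintegral_lt_top.ne
  have h_neg_top : ∫⁻ x, ENNReal.ofReal (-(u x + v x)) ∂μ = ⊤ ↔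
      ∫⁻ x, ENNReal.ofReal (-u x) ∂μ = ⊤ := by
    have h_le : ∫⁻ x, ENNReal.ofReal (-(u x + v x)) ∂μ ≤
        ∫⁻ x, ENNReal.ofReal (-u x) ∂μ + ∫⁻ x, ENNReal.ofReal (-v x) ∂μ := by
      simpa only [neg_add, Pi.neg_apply] using
        lintegral_ofReal_add_le (μ := μ) (u := fun x => -u x) hvm.neg
    have h_ge : ∫⁻ x, ENNReal.ofReal (-u x) ∂μ ≤
        ∫⁻ x, ENNReal.ofReal (-(u x + v x)) ∂μ + ∫⁻ x, ENNReal.ofReal (v x) ∂μ := by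
      simpa using lintegral_ofReal_add_le (μ := μ) (u := fun x => -(u x + v x)) hvm
    constructor <;> intro h
    · rw [h, top_le_iff, ENNReal.add_eq_top] at h_le
      exact h_le.resolve_right hv_neg
    · rw [h, top_le_iff, ENNReal.add_eq_top] at h_ge
      exact h_ge.resolve_right hv_pos
  rw [← quasiIntegral_eq_coe_integral hv]
  refine coe_sub_coe_eq_add_of_add_eq_add hv_pos hv_neg h_neg_top ?_
  iterate 4 rw [← lintegral_add_left (by fun_prop)]
  exact lintegral_congr fun x => ofReal_add_add_ofReal_neg_add_ofReal_neg (u x) (v x)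

end QuasiIntegral

section Singular

variable {α : Type*} [MeasurableSpace α] {μ ν ρ : Measure α}

lemma rnDeriv_eq_zero_or_of_mutuallySingular (h : μ ⟂ₘ ν) :
    ∀ᵐ x ∂ρ, μ.rnDeriv ρ x = 0 ∨ ν.rnDeriv ρ x = 0 := by
  obtain ⟨s, -, hμs, hνs⟩ := h
  have hμ : μ.rnDeriv ρ =ᵐ[ρ.restrict s] 0 := by
    rw [← lintegral_eq_zero_iff (μ.measurable_rnDeriv ρ), ← nonpos_iff_eq_zero, ← hμs]
    exact Measure.setLIntegral_rnDeriv_le s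
  have hν : ν.rnDeriv ρ =ᵐ[ρ.restrict sᶜ] 0 := by
    rw [← lintegral_eq_zero_iff (ν.measurable_rnDeriv ρ), ← nonpos_iff_eq_zero, ← hνs]
    exact Measure.setLIntegral_rnDeriv_le sᶜ
  filter_upwards [ae_imp_of_ae_restrict hμ, ae_imp_of_ae_restrict hν] with x hx hxc
  exact (em (x ∈ s)).imp hx hxc

lemma mutuallySingular_finsetSum_right {ι : Type*} {s : Finset ι} {ν : ι → Measure α}
    (h : ∀ i ∈ s, μ ⟂ₘ ν i) : μ ⟂ₘ ∑ i ∈ s, ν i :=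
  Finset.sum_induction _ _ (fun _ _ => Measure.MutuallySingular.add_right)
    Measure.MutuallySingular.zero_right h

lemma smul_absolutelyContinuous_iff {c : ℝ≥0∞} (hc : c ≠ 0) :
    c • μ ≪ ν ↔ μ ≪ ν :=
  ⟨fun h => (Measure.absolutelyContinuous_smul hc).trans h, fun h => h.smul_left c⟩

end Singular

section Entropy

variable {α : Type*} [MeasureSpace α] {μ ν : Measure α}

lemma dEntropy_of_not_absolutelyContinuous (h : ¬ μ ≪ volume) : dEntropy μ = ⊥ := if_neg h

lemma dEntropy_eq_quasiIntegral (h : μ ≪ volume) :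
    dEntropy μ = quasiIntegral volume fun x => Real.negMulLog (μ.rnDeriv volume x).toReal := by
  simp only [dEntropy, if_pos h, quasiIntegral, Real.negMulLog_eq_neg, neg_neg]

lemma measurable_negMulLog_rnDeriv (μ ν : Measure α) :
    Measurable fun x => Real.negMulLog (μ.rnDeriv ν x).toReal :=
  Real.continuous_negMulLog.measurable.comp (μ.measurable_rnDeriv ν).ennreal_toReal

@[simp]
lemma dEntropy_zero : dEntropy (0 : Measure α) = 0 := by
  rw [dEntropy_eq_quasiIntegral (Measure.AbsolutelyContinuous.zero _),
    ← quasiIntegral_zero (μ := (volume : Measure α))]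
  refine quasiIntegral_congr_ae ?_
  filter_upwards [Measure.rnDeriv_zero (volume : Measure α)] with x hx
  simp [hx]

variable [SigmaFinite (volume : Measure α)]

lemma dEntropy_add [SigmaFinite μ] [SigmaFinite ν] (h : μ ⟂ₘ ν) :
    dEntropy (μ + ν) = dEntropy μ + dEntropy ν := by
  by_cases hac : μ ≪ volume ∧ ν ≪ volume
  · obtain ⟨hμ, hν⟩ := hac
    have h_zero := rnDeriv_eq_zero_or_of_mutuallySingular (ρ := volume) h
    rw [dEntropy_eq_quasiIntegral (hμ.add_left hν), dEntropy_eq_quasiIntegral hμ,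
      dEntropy_eq_quasiIntegral hν,
      ← quasiIntegral_add_of_ae_eq_zero_or (measurable_negMulLog_rnDeriv μ volume)
        (h_zero.mono fun x hx => hx.imp (by simp +contextual) (by simp +contextual))]
    refine quasiIntegral_congr_ae ?_
    filter_upwards [Measure.rnDeriv_add' μ ν volume, h_zero] with x hadd hx
    rcases hx with hx | hx <;> simp [hadd, hx]
  · rw [dEntropy_of_not_absolutelyContinuous (mt Measure.AbsolutelyContinuous.add_left_iff.1 hac)]
    rcases not_and_or.1 hac with hμ | hν
    · rw [dEntropy_of_not_absolutelyContinuous hμ, EReal.bot_add]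
    · rw [dEntropy_of_not_absolutelyContinuous hν, EReal.add_bot]

lemma dEntropy_finsetSum {ι : Type*} {ν : ι → Measure α} [∀ i, IsFiniteMeasure (ν i)]
    {s : Finset ι} (h : (s : Set ι).Pairwise fun i j => ν i ⟂ₘ ν j) :
    dEntropy (∑ i ∈ s, ν i) = ∑ i ∈ s, dEntropy (ν i) := by
  classical
  induction s using Finset.induction_on with
  | empty => simp
  | insert i s hi ih =>
    have hdisj : ν i ⟂ₘ ∑ j ∈ s, ν j := mutuallySingular_finsetSum_right fun j hj =>
      h (s.mem_insert_self i) (Finset.mem_insert_of_mem hj) (ne_of_mem_of_not_mem hj hi).symm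
    rw [Finset.sum_insert hi, Finset.sum_insert hi, dEntropy_add hdisj,
      ih (h.mono (Finset.coe_subset.2 (Finset.subset_insert i s)))]

lemma dEntropy_smul [IsFiniteMeasure μ] {c : ℝ≥0∞} (hc₀ : c ≠ 0) (hc : c ≠ ⊤) :
    dEntropy (c • μ) = c * dEntropy μ + ((μ.real univ * Real.negMulLog c.toReal : ℝ) : EReal) := by
  by_cases hμ : μ ≪ volume
  · have hdens : (fun x => Real.negMulLog ((c • μ).rnDeriv volume x).toReal) =ᵐ[volume] fun x =>
        c.toReal * Real.negMulLog (μ.rnDeriv volume x).toReal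
          + (μ.rnDeriv volume x).toReal * Real.negMulLog c.toReal := by
      filter_upwards [Measure.rnDeriv_smul_left_of_ne_top' μ volume hc] with x hx
      rw [hx, Pi.smul_apply, smul_eq_mul, ENNReal.toReal_mul, Real.negMulLog_mul, add_comm]
    rw [dEntropy_eq_quasiIntegral (hμ.smul_left c), dEntropy_eq_quasiIntegral hμ,
      quasiIntegral_congr_ae hdens,
      quasiIntegral_add_of_integrable ((measurable_negMulLog_rnDeriv μ volume).const_mul _)
        ((μ.measurable_rnDeriv volume).ennreal_toReal.mul_const _)
        (Measure.integrable_toReal_rnDeriv.mul_const _),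
      quasiIntegral_const_mul ENNReal.toReal_nonneg, integral_mul_const,
      Measure.integral_toReal_rnDeriv hμ, EReal.coe_ennreal_toReal hc]
  · have hcμ : ¬ c • μ ≪ volume := mt (smul_absolutelyContinuous_iff hc₀).1 hμ
    rw [dEntropy_of_not_absolutelyContinuous hμ, dEntropy_of_not_absolutelyContinuous hcμ,
      EReal.mul_bot_of_pos (by simpa [pos_iff_ne_zero] using hc₀), EReal.bot_add]

lemma dEntropy_map_measurableEquiv [SigmaFinite μ] {β : Type*} [MeasureSpace β] (e : α ≃ᵐ β)
    (he : MeasurePreserving e) :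
    dEntropy (μ.map e) = dEntropy μ := by
  by_cases hμ : μ ≪ volume
  · have hdens : (fun x => (μ.map e).rnDeriv volume (e x)) =ᵐ[volume] μ.rnDeriv volume := by
      simpa only [he.map_eq] using e.measurableEmbedding.rnDeriv_map μ volume
    have hmap : μ.map e ≪ volume := by simpa only [he.map_eq] using hμ.map e.measurable
    rw [dEntropy_eq_quasiIntegral hmap, dEntropy_eq_quasiIntegral hμ,
      ← quasiIntegral_comp he e.measurableEmbedding]
    exact quasiIntegral_congr_ae (hdens.mono fun x hx => by simp only [hx])
  · have hmap : ¬ μ.map e ≪ volume := fun h => hμ <| by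
      have hback := h.map e.symm.measurable
      rwa [(he.symm e).map_eq, e.map_symm_map] at hback
    rw [dEntropy_of_not_absolutelyContinuous hμ, dEntropy_of_not_absolutelyContinuous hmap]

theorem dEntropy_average_map {ι : Type*} [Fintype ι] [Nonempty ι] [IsFiniteMeasure μ]
    {e : ι → α ≃ᵐ α} (he : ∀ i, MeasurePreserving (e i))
    (h : Pairwise fun i j => μ.map (e i) ⟂ₘ μ.map (e j)) :
    dEntropy ((Fintype.card ι : ℝ≥0∞)⁻¹ • ∑ i, μ.map (e i)) =
      ((μ.real univ * Real.log (Fintype.card ι) : ℝ) : EReal) + dEntropy μ := by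
  have hmass : (∑ i, μ.map (e i)).real univ = Fintype.card ι * μ.real univ := by
    simp [measureReal_def, Measure.map_apply (e _).measurable]
  have hlog : Fintype.card ι * μ.real univ * Real.negMulLog (Fintype.card ι : ℝ≥0∞)⁻¹.toReal =
      μ.real univ * Real.log (Fintype.card ι) := by
    simp only [Real.negMulLog, ENNReal.toReal_inv, ENNReal.toReal_natCast, Real.log_inv]
    field_simp
  have hinv : (((Fintype.card ι : ℝ≥0∞)⁻¹ : ℝ≥0∞) : EReal) * (Fintype.card ι : EReal) = 1 := by
    have h_cast : ((Fintype.card ι : ℝ≥0∞) : EReal) = Fintype.card ι := rfl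
    rw [← h_cast, ← EReal.coe_ennreal_mul, ENNReal.inv_mul_cancel (by simp) (by simp),
      EReal.coe_ennreal_one]
  rw [dEntropy_smul (by simp) (by simp), dEntropy_finsetSum (h.set_pairwise _), hmass,
    hlog, add_comm]
  simp only [dEntropy_map_measurableEquiv _ (he _), Finset.sum_const, Finset.card_univ]
  rw [EReal.nsmul_eq_mul, ← mul_assoc, hinv, one_mul]

end Entropy

section OrderStatistics

variable {ι X : Type*}

lemma orderStat_le_iff_lt_sum {x : Fin d → ℝ} {i : Fin d} {t : ℝ} :
    orderStat x i ≤ t ↔ (i : ℕ) < ∑ j, if x j ≤ t then 1 else 0 := by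
  rw [← Equiv.sum_comp (Tuple.sort x), ← Finset.card_filter]
  exact (Tuple.lt_card_le_iff_apply_le_of_monotone (Tuple.monotone_sort x)).symm

lemma measurable_orderStat : Measurable (orderStat : (Fin d → ℝ) → Fin d → ℝ) := by
  refine measurable_pi_iff.2 fun i => measurable_of_Iic fun t => ?_
  simp only [preimage, mem_Iic, orderStat_le_iff_lt_sum]
  exact measurableSet_lt measurable_const <| Finset.measurable_sum _ fun j _ =>
    .ite (measurableSet_le (measurable_pi_apply j) measurable_const) measurable_const
      measurable_const

/-- Permutation of coordinates `x ↦ x ∘ π` as a measurable equivalence. -/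
def permuteCoords [MeasurableSpace X] (π : Equiv.Perm ι) : (ι → X) ≃ᵐ (ι → X) :=
  .arrowCongr' π.symm (.refl X)

lemma coe_permuteCoords [MeasurableSpace X] (π : Equiv.Perm ι) :
    ⇑(permuteCoords π) = fun (x : ι → X) i => x (π i) := rfl

lemma measurePreserving_permuteCoords [MeasureSpace X] [SigmaFinite (volume : Measure X)]
    [Fintype ι] (π : Equiv.Perm ι) :
    MeasurePreserving (permuteCoords π : (ι → X) ≃ᵐ (ι → X)) :=
  volume_preserving_arrowCongr' π.symm (.refl X) (.id volume)

lemma symmetrize_eq_sum_map_permuteCoords (ν : Measure (Fin d → ℝ)) :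
    symmetrize ν = (Fintype.card (Equiv.Perm (Fin d)) : ℝ≥0∞)⁻¹ •
      ∑ π : Equiv.Perm (Fin d), ν.map (permuteCoords π) := by
  rw [Fintype.card_perm, Fintype.card_fin]
  rfl

lemma absolutelyContinuous_symmetrize (ν : Measure (Fin d → ℝ)) : ν ≪ symmetrize ν := by
  have hle : ν ≤ ∑ π : Equiv.Perm (Fin d), ν.map (permuteCoords π) := by
    have h_id : ν = ν.map (permuteCoords (1 : Equiv.Perm (Fin d))) := Measure.map_id.symm
    conv_lhs => rw [h_id]
    exact Finset.single_le_sum (f := fun π => ν.map (permuteCoords π))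
      (fun _ _ => Measure.zero_le _) (Finset.mem_univ 1)
  rw [symmetrize_eq_sum_map_permuteCoords]
  exact hle.absolutelyContinuous.trans (Measure.absolutelyContinuous_smul (by simp))

lemma ae_injective [Fintype ι] : ∀ᵐ x : ι → ℝ, Function.Injective x := by
  have h_ne (i j : ι) (hij : i ≠ j) : ∀ᵐ x : ι → ℝ, x i ≠ x j := by
    classical
    let L : (ι → ℝ) →ₗ[ℝ] ℝ := LinearMap.proj (R := ℝ) (φ := fun _ => ℝ) i - LinearMap.proj j
    have hL : LinearMap.ker L ≠ ⊤ := fun h => by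
      simpa [L, hij.symm] using LinearMap.congr_fun (LinearMap.ker_eq_top.1 h) (Pi.single i 1)
    rw [ae_iff]
    convert Measure.addHaar_submodule (volume : Measure (ι → ℝ)) _ hL using 2
    ext x
    simp [L, sub_eq_zero]
  have h_all : ∀ᵐ x : ι → ℝ, ∀ i j, i ≠ j → x i ≠ x j := by
    simpa only [ae_all_iff, Filter.eventually_imp_distrib_left] using h_ne
  exact h_all.mono fun x hx i j => not_imp_not.1 (hx i j)

lemma perm_eq_of_strictMono_comp [LinearOrder ι] [WellFoundedLT ι] [PartialOrder X]
    {f : ι → X} {σ τ : Equiv.Perm ι} (hσ : StrictMono (f ∘ σ)) (hτ : StrictMono (f ∘ τ)) :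
    σ = τ := by
  have hf : Function.Injective f := (Equiv.injective_comp σ f).1 hσ.injective
  have hrange : range (f ∘ σ) = range (f ∘ τ) := by
    rw [σ.surjective.range_comp, τ.surjective.range_comp]
  exact Equiv.ext fun i => hf (congrFun ((hσ.range_inj hτ).1 hrange) i)

lemma mutuallySingular_map_permuteCoords [LinearOrder ι] [WellFoundedLT ι] [PartialOrder X]
    [MeasurableSpace X] {ν : Measure (ι → X)} (hν : ∀ᵐ x ∂ν, StrictMono x)
    {π ρ : Equiv.Perm ι} (hπρ : π ≠ ρ) :
    ν.map (permuteCoords π) ⟂ₘ ν.map (permuteCoords ρ) := by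
  have h_null (σ : Equiv.Perm ι) :
      ν.map (permuteCoords σ) {y | StrictMono (y ∘ σ.symm)}ᶜ = 0 := by
    rw [MeasurableEquiv.map_apply]
    simpa [ae_iff, preimage, coe_permuteCoords, Function.comp_def] using hν
  refine .mk (h_null π) (h_null ρ) fun y _ => ?_
  simp only [← compl_inter, mem_compl_iff]
  exact fun ⟨hπ, hρ⟩ => hπρ (Equiv.symm_bijective.injective (perm_eq_of_strictMono_comp hπ hρ))

lemma ae_monotone_map_orderStat (μ : Measure (Fin d → ℝ)) :
    ∀ᵐ x ∂μ.map orderStat, Monotone x :=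
  (ae_map_iff measurable_orderStat.aemeasurable isClosed_monotone.measurableSet).2
    (.of_forall Tuple.monotone_sort)

theorem stmt_16_general (ν : Measure (Fin d → ℝ)) [IsFiniteMeasure ν]
    (hν : ∀ᵐ x ∂ν, Monotone x) :
    dEntropy (symmetrize ν) =
      ((ν.real univ * Real.log (d.factorial : ℝ) : ℝ) : EReal) + dEntropy ν := by
  by_cases hac : ν ≪ volume
  · have hstrict : ∀ᵐ x ∂ν, StrictMono x := by
      filter_upwards [hν, hac.ae_le ae_injective] with x hmono hinj
      exact hmono.strictMono_of_injective hinj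
    rw [symmetrize_eq_sum_map_permuteCoords, dEntropy_average_map measurePreserving_permuteCoords
      fun π ρ => mutuallySingular_map_permuteCoords hstrict, Fintype.card_perm, Fintype.card_fin]
  · have hsymm : ¬ symmetrize ν ≪ volume := mt (absolutelyContinuous_symmetrize ν).trans hac
    rw [dEntropy_of_not_absolutelyContinuous hac, dEntropy_of_not_absolutelyContinuous hsymm,
      EReal.add_bot]

end OrderStatistics

/-- Lemma `lem:HX_HXPI`.  Let `X` be a random vector on `ℝ^d` (with
distribution `μ`), `X^OS` its order statistics, and `Π` a uniform random permutation of
`{1, …, d}` independent of `X`.  Then `H((X^OS)_Π) = log(d!) + H(X^OS)`. -/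
theorem stmt_16 {d : ℕ} (μ : Measure (Fin d → ℝ)) (hμ : IsProbabilityMeasure μ) :
    dEntropy (symmetrize (μ.map orderStat)) =
      ((Real.log (d.factorial : ℝ)) : EReal) + dEntropy (μ.map orderStat) := by
  have := Measure.isProbabilityMeasure_map (μ := μ) measurable_orderStat.aemeasurable
  simpa using stmt_16_general _ (ae_monotone_map_orderStat μ)

end MaxEntOS
end
end
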